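/- Let A ∈ ℝ^{n×n}, B ∈ ℝ^{n×m} with (A,B) stabilizable and all eigenvalues of A in the closed unit disc. For ε > 0 let P_ε be the unique positive definite solution of the discrete algebraic Riccati equation AᵀP A − P − AᵀP B (I + BᵀP B)^{−1} BᵀP A + εI = 0, and let K_ε := (I + BᵀP_ε B)^{−1} BᵀP_ε A. Then for every ρ > 1/2 there exists ε* > 0 such that for all ε ∈ (0, ε*] the matrix A − ρ B K_ε is Schur stable. -/

import Mathlib

open Matrix Filter Topology Kronecker
open scoped Classical

noncomputable section

/-- A complex square matrix is Schur stable if all its eigenvalues lie in the open unit disc. -/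
def SchurStableC {ι : Type*} [Fintype ι] [DecidableEq ι] (M : Matrix ι ι ℂ) : Prop :=
  ∀ μ ∈ spectrum ℂ M, ‖μ‖ < 1

/-- A real square matrix is Schur stable if all its (complex) eigenvalues lie in the open
unit disc. -/
def SchurStable {ι : Type*} [Fintype ι] [DecidableEq ι] (M : Matrix ι ι ℝ) : Prop :=
  SchurStableC (M.map Complex.ofReal)

/-- All eigenvalues of a real square matrix lie in the closed unit disc. -/
def EigInClosedUnitDisc {ι : Type*} [Fintype ι] [DecidableEq ι] (M : Matrix ι ι ℝ) : Prop :=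
  ∀ μ ∈ spectrum ℂ (M.map Complex.ofReal), ‖μ‖ ≤ 1

/-- The pair (A,B) is stabilizable. -/
def Stabilizable {n m : ℕ} (A : Matrix (Fin n) (Fin n) ℝ) (B : Matrix (Fin n) (Fin m) ℝ) : Prop :=
  ∃ K : Matrix (Fin m) (Fin n) ℝ, SchurStable (A - B * K)

/-- The pair (C,A) is detectable. -/
def Detectable {n q : ℕ} (C : Matrix (Fin q) (Fin n) ℝ) (A : Matrix (Fin n) (Fin n) ℝ) : Prop :=
  ∃ F : Matrix (Fin n) (Fin q) ℝ, SchurStable (A - F * C)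

/-- `P` is a positive definite solution of the discrete algebraic Riccati equation
`AᵀPA − P − AᵀPB(I + BᵀPB)⁻¹BᵀPA + εI = 0`. -/
def IsDARESol {n m : ℕ} (A : Matrix (Fin n) (Fin n) ℝ) (B : Matrix (Fin n) (Fin m) ℝ)
    (ε : ℝ) (P : Matrix (Fin n) (Fin n) ℝ) : Prop :=
  P.PosDef ∧
    Aᵀ * P * A - P - Aᵀ * P * B * (1 + Bᵀ * P * B)⁻¹ * (Bᵀ * P * A)
      + ε • (1 : Matrix (Fin n) (Fin n) ℝ) = 0

/-- The low-gain feedback `K = (I + BᵀPB)⁻¹BᵀPA`. -/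
def gainK {n m : ℕ} (A : Matrix (Fin n) (Fin n) ℝ) (B : Matrix (Fin n) (Fin m) ℝ)
    (P : Matrix (Fin n) (Fin n) ℝ) : Matrix (Fin m) (Fin n) ℝ :=
  (1 + Bᵀ * P * B)⁻¹ * (Bᵀ * P * A)

/-- `ω_max`: zero if `A` is Schur stable, otherwise the largest `ω ∈ [0,π]` with
`det(e^{iω}I − A) = 0`. -/
def omegaMax {n : ℕ} (A : Matrix (Fin n) (Fin n) ℝ) : ℝ :=
  if SchurStable A then 0
  else sSup {ω : ℝ | ω ∈ Set.Icc 0 Real.pi ∧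
    (Complex.exp (ω * Complex.I) • (1 : Matrix (Fin n) (Fin n) ℂ)
      - A.map Complex.ofReal).det = 0}

/-- In-degree `d_in(i) = Σ_j a_{ij}`. -/
def dIn {N : ℕ} (a : Fin N → Fin N → ℝ) (i : Fin N) : ℝ := ∑ j, a i j

/-- The Laplacian matrix of the weights `a`. -/
def lapL {N : ℕ} (a : Fin N → Fin N → ℝ) : Matrix (Fin N) (Fin N) ℝ :=
  Matrix.of fun i j => if i = j then dIn a i else -a i j

/-- The expanded Laplacian `L̄ = L + diag(ι)`. -/
def lapLbar {N : ℕ} (a : Fin N → Fin N → ℝ) (ι : Fin N → ℝ) : Matrix (Fin N) (Fin N) ℝ :=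
  lapL a + Matrix.diagonal ι

/-- `D̄ = I − (2I + D_in)⁻¹ L̄`. -/
def DbarM {N : ℕ} (a : Fin N → Fin N → ℝ) (ι : Fin N → ℝ) : Matrix (Fin N) (Fin N) ℝ :=
  1 - ((2 : ℝ) • (1 : Matrix (Fin N) (Fin N) ℝ) + Matrix.diagonal (dIn a))⁻¹ * lapLbar a ι

lemma lg_pow_tendsto {n : ℕ} (M : Matrix (Fin n) (Fin n) ℝ) (h : SchurStable M) :
    Tendsto (fun k : ℕ => M ^ k) atTop (𝓝 0) := by
  rcases Nat.eq_zero_or_pos n with rfl | hn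
  · have : (fun k : ℕ => M ^ k) = fun _ => 0 := by
      funext k; exact Subsingleton.elim _ _
    rw [this]; exact tendsto_const_nhds
  have : Nonempty (Fin n) := ⟨⟨0, hn⟩⟩
  let _ : NormedRing (Matrix (Fin n) (Fin n) ℂ) := Matrix.linftyOpNormedRing
  let _ : NormedAlgebra ℂ (Matrix (Fin n) (Fin n) ℂ) := Matrix.linftyOpNormedAlgebra
  have : CompleteSpace (Matrix (Fin n) (Fin n) ℂ) := FiniteDimensional.complete ℂ _
  set a := M.map Complex.ofReal with ha
  have hr : spectralRadius ℂ a < (1 : NNReal) := by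
    apply spectrum.spectralRadius_lt_of_forall_lt
    intro k hk
    have := h k hk
    exact_mod_cast this
  obtain ⟨r, hr1, hr2⟩ := exists_between hr
  have hr3 : r ≠ ⊤ := (hr2.trans ENNReal.coe_lt_top).ne
  lift r to NNReal using hr3
  have hg := spectrum.pow_nnnorm_pow_one_div_tendsto_nhds_spectralRadius a
  have hev := hg.eventually (gt_mem_nhds hr1)
  have hr4 : r < 1 := by exact_mod_cast hr2
  have hz : Tendsto (fun k : ℕ => a ^ k) atTop (𝓝 0) := by
    refine (tendsto_zero_iff_norm_tendsto_zero (E := Matrix (Fin n) (Fin n) ℂ)).2 ?_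
    refine squeeze_zero' (Eventually.of_forall fun _ => norm_nonneg _) ?_
      (tendsto_pow_atTop_nhds_zero_of_lt_one r.2 (by exact_mod_cast hr4))
    filter_upwards [hev, eventually_gt_atTop 0] with k hk hk0
    have h1 : ((‖a ^ k‖₊ : ENNReal)) ≤ (r : ENNReal) ^ k := by
      have := ENNReal.rpow_le_rpow hk.le (Nat.cast_nonneg (α := ℝ) k)
      rw [← ENNReal.rpow_mul, one_div, inv_mul_cancel₀ (by positivity), ENNReal.rpow_one,
        ENNReal.rpow_natCast] at this
      exact this
    have h2 : ‖a ^ k‖₊ ≤ r ^ k := by exact_mod_cast h1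
    exact_mod_cast h2
  have hmap : ∀ k : ℕ, M ^ k = (a ^ k).map Complex.re := by
    intro k
    have : a ^ k = (M ^ k).map Complex.ofReal := by
      have := map_pow (Complex.ofRealHom.mapMatrix (m := Fin n)) M k
      exact this.symm
    rw [this]; ext i j; simp
  have hc : Continuous fun X : Matrix (Fin n) (Fin n) ℂ => X.map Complex.re :=
    continuous_id.matrix_map Complex.continuous_re
  have := (hc.tendsto 0).comp hz
  have h0 : (0 : Matrix (Fin n) (Fin n) ℂ).map Complex.re = 0 := by ext i j; simp
  rw [h0] at this
  refine this.congr fun k => (hmap k).symm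

lemma lg_spec_iff {n : ℕ} (M : Matrix (Fin n) (Fin n) ℂ) (μ : ℂ) :
    μ ∈ spectrum ℂ M ↔ ∃ v : Fin n → ℂ, v ≠ 0 ∧ M *ᵥ v = μ • v := by
  rw [spectrum.mem_iff, Matrix.isUnit_iff_isUnit_det, isUnit_iff_ne_zero, not_not,
    ← Matrix.exists_mulVec_eq_zero_iff]
  have : ∀ v, (algebraMap ℂ (Matrix (Fin n) (Fin n) ℂ) μ - M) *ᵥ v = μ • v - M *ᵥ v := by
    intro v
    rw [Matrix.sub_mulVec, Algebra.algebraMap_eq_smul_one, Matrix.smul_mulVec, Matrix.one_mulVec]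
  simp only [this, sub_eq_zero, eq_comm]

lemma lg_spec_transpose {n : ℕ} (M : Matrix (Fin n) (Fin n) ℂ) (μ : ℂ) (v : Fin n → ℂ)
    (hv : v ≠ 0) (h : Mᵀ *ᵥ v = μ • v) : μ ∈ spectrum ℂ M := by
  have h1 := (lg_spec_iff Mᵀ μ).2 ⟨v, hv, h⟩
  rw [spectrum.mem_iff, Matrix.isUnit_iff_isUnit_det] at h1 ⊢
  rw [← Matrix.det_transpose]
  convert h1 using 3
  rw [Matrix.transpose_sub, Algebra.algebraMap_eq_smul_one, Matrix.transpose_smul,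
    Matrix.transpose_one]

/-- complexification -/
def lgC {a b : ℕ} (M : Matrix (Fin a) (Fin b) ℝ) : Matrix (Fin a) (Fin b) ℂ :=
  M.map Complex.ofReal

lemma lgC_mul {a b c : ℕ} (M : Matrix (Fin a) (Fin b) ℝ) (N : Matrix (Fin b) (Fin c) ℝ) :
    lgC (M * N) = lgC M * lgC N := by
  have := Matrix.map_mul (L := M) (M := N) (f := Complex.ofRealHom)
  exact this

lemma lgC_add {a b : ℕ} (M N : Matrix (Fin a) (Fin b) ℝ) :
    lgC (M + N) = lgC M + lgC N := by
  ext i j; simp [lgC]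

lemma lgC_sub {a b : ℕ} (M N : Matrix (Fin a) (Fin b) ℝ) :
    lgC (M - N) = lgC M - lgC N := by
  ext i j; simp [lgC]

lemma lgC_one {a : ℕ} : lgC (1 : Matrix (Fin a) (Fin a) ℝ) = 1 := by
  ext i j; simp [lgC, Matrix.one_apply]; split_ifs <;> simp

lemma lgC_transpose {a b : ℕ} (M : Matrix (Fin a) (Fin b) ℝ) : lgC Mᵀ = (lgC M)ᵀ := rfl

/-- quadratic form -/
def lgq {a : ℕ} (P : Matrix (Fin a) (Fin a) ℝ) (x : Fin a → ℂ) : ℝ :=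
  (star x ⬝ᵥ (lgC P *ᵥ x)).re

lemma lgq_eq {a : ℕ} (P : Matrix (Fin a) (Fin a) ℝ) (x : Fin a → ℂ) :
    lgq P x = (fun i => (x i).re) ⬝ᵥ (P *ᵥ fun i => (x i).re) +
      (fun i => (x i).im) ⬝ᵥ (P *ᵥ fun i => (x i).im) := by
  simp only [lgq, lgC, dotProduct, Matrix.mulVec, Complex.re_sum, Finset.mul_sum, Matrix.map_apply,
    ← Finset.sum_add_distrib]
  refine Finset.sum_congr rfl fun i _ => Finset.sum_congr rfl fun j _ => ?_
  simp

lemma lgq_nonneg {a : ℕ} {P : Matrix (Fin a) (Fin a) ℝ} (hP : P.PosSemidef) (x : Fin a → ℂ) :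
    0 ≤ lgq P x := by
  rw [lgq_eq]
  have h1 := hP.dotProduct_mulVec_nonneg (fun i => (x i).re)
  have h2 := hP.dotProduct_mulVec_nonneg (fun i => (x i).im)
  simp only [star_trivial] at h1 h2
  exact add_nonneg h1 h2

lemma lgq_pos {a : ℕ} {P : Matrix (Fin a) (Fin a) ℝ} (hP : P.PosSemidef) (x : Fin a → ℂ)
    (hx : lgC P *ᵥ x ≠ 0) : 0 < lgq P x := by
  refine lt_of_le_of_ne (lgq_nonneg hP x) fun h0 => hx ?_
  rw [lgq_eq] at h0
  have h1 := hP.dotProduct_mulVec_nonneg (fun i => (x i).re)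
  have h2 := hP.dotProduct_mulVec_nonneg (fun i => (x i).im)
  have e1 := hP.dotProduct_mulVec_zero_iff (fun i => (x i).re)
  have e2 := hP.dotProduct_mulVec_zero_iff (fun i => (x i).im)
  simp only [star_trivial] at h1 h2 e1 e2
  have z1 := e1.1 (by linarith)
  have z2 := e2.1 (by linarith)
  funext i
  have y1 := congrFun z1 i
  have y2 := congrFun z2 i
  simp only [Matrix.mulVec, dotProduct, Pi.zero_apply] at y1 y2 ⊢
  apply Complex.ext
  · simpa [lgC, Complex.re_sum] using y1
  · simpa [lgC, Complex.im_sum] using y2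

lemma lgq_add {a : ℕ} (P Q : Matrix (Fin a) (Fin a) ℝ) (x : Fin a → ℂ) :
    lgq (P + Q) x = lgq P x + lgq Q x := by
  simp [lgq, lgC_add, Matrix.add_mulVec, dotProduct_add]

lemma lgq_congr {a b : ℕ} (P : Matrix (Fin a) (Fin a) ℝ) (M : Matrix (Fin a) (Fin b) ℝ)
    (x : Fin b → ℂ) : lgq (Mᵀ * P * M) x = lgq P (lgC M *ᵥ x) := by
  have h : (lgC M)ᵀ = (lgC M)ᴴ := by ext i j; simp [lgC]
  simp only [lgq, lgC_mul, lgC_transpose]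
  rw [h, Matrix.star_mulVec, ← Matrix.mulVec_mulVec, ← Matrix.mulVec_mulVec,
    Matrix.dotProduct_mulVec]

lemma lgq_smul {a : ℕ} (P : Matrix (Fin a) (Fin a) ℝ) (c : ℂ) (x : Fin a → ℂ) :
    lgq P (c • x) = ‖c‖ ^ 2 * lgq P x := by
  have : star c * c = ((‖c‖ ^ 2 : ℝ) : ℂ) := by
    rw [Complex.star_def, mul_comm, Complex.mul_conj, Complex.normSq_eq_norm_sq]
  simp only [lgq, Matrix.mulVec_smul, star_smul, smul_dotProduct, dotProduct_smul, smul_eq_mul]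
  rw [← mul_assoc, mul_comm c, this, Complex.re_ofReal_mul]

lemma lgq_one_pos {a : ℕ} {x : Fin a → ℂ} (hx : x ≠ 0) : 0 < lgq 1 x := by
  apply lgq_pos Matrix.PosSemidef.one
  rwa [lgC_one, Matrix.one_mulVec]

lemma lgq_eq_of_mulVec_eq {a : ℕ} {P : Matrix (Fin a) (Fin a) ℝ} (hP : Pᵀ = P) (x y : Fin a → ℂ)
    (h : lgC P *ᵥ x = lgC P *ᵥ y) : lgq P x = lgq P y := by
  have hh : (lgC P)ᴴ = lgC P := by
    conv_rhs => rw [← hP]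
    ext i j; simp [lgC]
  have e : ∀ u w : Fin a → ℂ, star u ⬝ᵥ (lgC P *ᵥ w) = star (lgC P *ᵥ u) ⬝ᵥ w := by
    intro u w
    rw [Matrix.star_mulVec, hh, Matrix.dotProduct_mulVec]
  unfold lgq
  rw [h, e, h, ← e]

lemma lg_limit_zero {n m : ℕ}
    (A : Matrix (Fin n) (Fin n) ℝ) (B : Matrix (Fin n) (Fin m) ℝ)
    (hstab : Stabilizable A B) (hA : EigInClosedUnitDisc A)
    (P : Matrix (Fin n) (Fin n) ℝ) (K : Matrix (Fin m) (Fin n) ℝ)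
    (hP : P.PosSemidef)
    (hPB : Bᵀ * P * (A - B * K) = K)
    (hPA : Aᵀ * P * (A - B * K) = P)
    (hLy : (A - B * K)ᵀ * P * (A - B * K) + Kᵀ * (1 : Matrix (Fin m) (Fin m) ℝ) * K = P) : P = 0 := by
  by_contra hne
  have hsym : Pᵀ = P := by simpa using hP.isHermitian.eq
  set G := A - B * K with hG
  set W : Submodule ℂ (Fin n → ℂ) := LinearMap.range (lgC P).mulVecLin with hW
  set T : (Fin n → ℂ) →ₗ[ℂ] (Fin n → ℂ) := (lgC A)ᵀ.mulVecLin with hT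
  have hPA' : ∀ v, T (lgC P *ᵥ (lgC G *ᵥ v)) = lgC P *ᵥ v := by
    intro v
    have := congrArg (fun X => lgC X *ᵥ v) hPA
    simp only [lgC_mul, lgC_transpose, ← Matrix.mulVec_mulVec] at this
    exact this
  have hle : W ≤ W.map T := by
    rintro _ ⟨v, rfl⟩
    exact ⟨lgC P *ᵥ (lgC G *ᵥ v), ⟨_, rfl⟩, hPA' v⟩
  have heq : W = W.map T := Submodule.eq_of_le_of_finrank_le hle (Submodule.finrank_map_le T W)
  have hmaps : ∀ w ∈ W, T w ∈ W := by
    intro w hw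
    rw [heq]; exact ⟨w, hw, rfl⟩
  set TW := T.restrict hmaps with hTW
  have hsurj : Function.Surjective TW := by
    rintro ⟨w, hw⟩
    obtain ⟨u, hu, rfl⟩ := heq ▸ hw
    exact ⟨⟨u, hu⟩, by ext1; simp [hTW]⟩
  have hinj : Function.Injective TW := LinearMap.injective_iff_surjective.2 hsurj
  have hWne : W ≠ ⊥ := by
    intro hb
    apply hne
    ext i j
    have h1 : lgC P *ᵥ (Pi.single j 1) ∈ W := ⟨_, rfl⟩
    rw [hb, Submodule.mem_bot] at h1
    have := congrFun h1 i
    simpa [lgC] using this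
  have : Nontrivial W := Submodule.nontrivial_iff_ne_bot.2 hWne
  obtain ⟨ν, hν⟩ := Module.End.exists_eigenvalue (K := ℂ) (V := W) TW
  obtain ⟨⟨w, hwW⟩, hw⟩ := hν.exists_hasEigenvector
  have hw0 : w ≠ 0 := fun h => hw.2 (by ext1; exact h)
  have hTw : T w = ν • w := by
    have := congrArg Subtype.val hw.apply_eq_smul
    simpa [hTW] using this
  obtain ⟨v, hv⟩ := hwW
  replace hv : lgC P *ᵥ v = w := hv
  set z := lgC G *ᵥ v with hz
  have hνz : lgC P *ᵥ (ν • z) = lgC P *ᵥ v := by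
    have h1 : (⟨lgC P *ᵥ (ν • z), ⟨_, rfl⟩⟩ : W) = ⟨lgC P *ᵥ v, ⟨_, rfl⟩⟩ := by
      apply hinj
      ext1
      simp only [hTW, LinearMap.coe_restrict_apply]
      rw [Matrix.mulVec_smul, map_smul, hPA', hv, hTw]
    exact congrArg Subtype.val h1
  have hνA : ‖ν‖ ≤ 1 := hA ν (lg_spec_transpose (lgC A) ν w hw0 hTw)
  have q1 : lgq P v = ‖ν‖ ^ 2 * lgq P z := by
    rw [← lgq_smul]; exact (lgq_eq_of_mulVec_eq hsym _ _ hνz).symm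
  have q2 : lgq P z + lgq 1 (lgC K *ᵥ v) = lgq P v := by
    conv_rhs => rw [← hLy, lgq_add, lgq_congr, lgq_congr]
  have q3 : 0 < lgq P v := lgq_pos hP v (by rw [hv]; exact hw0)
  have q4 : 0 ≤ lgq P z := lgq_nonneg hP z
  have hsq : ‖ν‖ ^ 2 ≤ 1 := by nlinarith [norm_nonneg ν]
  have hKv : lgC K *ᵥ v = 0 := by
    by_contra hk
    have := lgq_one_pos hk
    nlinarith
  rw [hKv] at q2
  have hν1 : 1 ≤ ‖ν‖ := by
    have h0 : lgq (1 : Matrix (Fin m) (Fin m) ℝ) 0 = 0 := by simp [lgq]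
    by_contra hlt
    push Not at hlt
    have : ‖ν‖ ^ 2 < 1 := by nlinarith [norm_nonneg ν]
    nlinarith
  have hBz : (lgC B)ᵀ *ᵥ (lgC P *ᵥ z) = 0 := by
    have := congrArg (fun X => lgC X *ᵥ v) hPB
    simp only [lgC_mul, lgC_transpose, ← Matrix.mulVec_mulVec] at this
    rw [hKv] at this
    exact this
  have hBw : (lgC B)ᵀ *ᵥ w = 0 := by
    rw [← hv, ← hνz, Matrix.mulVec_smul, Matrix.mulVec_smul, hBz, smul_zero]
  obtain ⟨F, hF⟩ := hstab
  have hfin : ν ∈ spectrum ℂ (lgC (A - B * F)) := by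
    apply lg_spec_transpose _ ν w hw0
    rw [lgC_sub, lgC_mul, Matrix.transpose_sub, Matrix.transpose_mul, Matrix.sub_mulVec,
      ← Matrix.mulVec_mulVec, hBw, Matrix.mulVec_zero, sub_zero]
    exact hTw
  have := hF ν hfin
  linarith

lemma lg_square {n m : ℕ}
    (A : Matrix (Fin n) (Fin n) ℝ) (B : Matrix (Fin n) (Fin m) ℝ) (ε : ℝ)
    (P : Matrix (Fin n) (Fin n) ℝ) (h : IsDARESol A B ε P) (F : Matrix (Fin m) (Fin n) ℝ) :
    (A - B * F)ᵀ * P * (A - B * F) + Fᵀ * F + ε • (1 : Matrix (Fin n) (Fin n) ℝ)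
      = P + (F - gainK A B P)ᵀ * (1 + Bᵀ * P * B) * (F - gainK A B P)
    ∧ Bᵀ * P * (A - B * gainK A B P) = gainK A B P
    ∧ Aᵀ * P * (A - B * gainK A B P) + ε • (1 : Matrix (Fin n) (Fin n) ℝ) = P := by
  obtain ⟨hP, hD⟩ := h
  have hsym : Pᵀ = P := by simpa using hP.isHermitian.eq
  have hpsd : (Bᵀ * P * B).PosSemidef := by
    simpa using hP.posSemidef.conjTranspose_mul_mul_same B
  have hS : (1 + Bᵀ * P * B).PosDef := Matrix.PosDef.one.add_posSemidef hpsd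
  have hu : IsUnit (1 + Bᵀ * P * B).det := (Matrix.isUnit_iff_isUnit_det _).1 hS.isUnit
  set K := gainK A B P with hK
  have hSK : (1 + Bᵀ * P * B) * K = Bᵀ * P * A := by
    rw [hK, gainK, ← Matrix.mul_assoc, Matrix.mul_nonsing_inv _ hu, Matrix.one_mul]
  have e2 : Bᵀ * P * (A - B * K) = K := by
    rw [Matrix.mul_sub, ← hSK, Matrix.add_mul, Matrix.one_mul, ← Matrix.mul_assoc]
    abel
  have hD' : Aᵀ * P * A - P - Aᵀ * P * B * K + ε • (1 : Matrix (Fin n) (Fin n) ℝ) = 0 := by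
    rw [hK, gainK, ← Matrix.mul_assoc (Aᵀ * P * B)]; exact hD
  have e3 : Aᵀ * P * (A - B * K) + ε • (1 : Matrix (Fin n) (Fin n) ℝ) = P := by
    rw [← sub_eq_zero, ← hD', Matrix.mul_sub, ← Matrix.mul_assoc]
    abel
  refine ⟨?_, e2, e3⟩
  have hKS : Kᵀ * (1 + Bᵀ * P * B) = Aᵀ * P * B := by
    have := congrArg Matrix.transpose hSK
    simpa [Matrix.transpose_mul, hsym, Matrix.mul_assoc] using this
  have e4 : (F - K)ᵀ * (1 + Bᵀ * P * B) * (F - K)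
      = Fᵀ * F + Fᵀ * (Bᵀ * P * B) * F - Fᵀ * (Bᵀ * P * A) - Aᵀ * P * B * F + Aᵀ * P * B * K := by
    rw [Matrix.transpose_sub, Matrix.sub_mul, hKS, ← hSK]
    simp only [Matrix.mul_sub, Matrix.sub_mul, Matrix.mul_add, Matrix.add_mul, Matrix.one_mul,
      Matrix.mul_one, Matrix.mul_assoc]
    abel
  rw [e4]
  rw [← sub_eq_zero, ← hD']
  simp only [Matrix.transpose_sub, Matrix.transpose_mul, Matrix.mul_sub, Matrix.sub_mul,
    Matrix.mul_assoc]
  abel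

lemma lgq_smul_left {a : ℕ} (P : Matrix (Fin a) (Fin a) ℝ) (c : ℝ) (x : Fin a → ℂ) :
    lgq (c • P) x = c * lgq P x := by
  rw [lgq_eq, lgq_eq]
  simp only [Matrix.smul_mulVec, dotProduct_smul, smul_eq_mul]
  ring

lemma lg_entry {n : ℕ} {P : Matrix (Fin n) (Fin n) ℝ} (hP : P.PosSemidef) (i j : Fin n) :
    |P i j| ≤ P.trace := by
  have hsym : P j i = P i j := by simpa using hP.isHermitian.apply i j
  have hd : ∀ i, P i i ≤ P.trace := fun i =>
    Finset.single_le_sum (f := fun i => P i i) (fun i _ => hP.diag_nonneg) (Finset.mem_univ i)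
  have h1 := hP.dotProduct_mulVec_nonneg (Pi.single i 1 + Pi.single j 1)
  have h2 := hP.dotProduct_mulVec_nonneg (Pi.single i 1 - Pi.single j 1)
  simp [Matrix.mulVec_add, Matrix.mulVec_sub, sub_dotProduct, add_dotProduct] at h1 h2
  have := hd i
  have := hd j
  rw [abs_le]
  constructor <;> linarith

lemma lg_trace_le {n : ℕ} {P : Matrix (Fin n) (Fin n) ℝ} (hP : P.PosSemidef)
    (M : Matrix (Fin n) (Fin n) ℝ) :
    (Mᵀ * P * M).trace ≤ P.trace * ∑ i, ∑ j, ∑ k, |M k i| * |M j i| := by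
  simp only [Matrix.trace, Matrix.diag, Matrix.mul_apply, Finset.sum_mul, Finset.mul_sum]
  refine Finset.sum_le_sum fun i _ => Finset.sum_le_sum fun j _ => ?_
  refine Finset.sum_le_sum fun k _ => ?_
  rw [← Finset.sum_mul]
  have h := lg_entry hP k j
  refine (le_abs_self _).trans ?_
  rw [Matrix.transpose_apply, abs_mul, abs_mul]
  have := mul_le_mul_of_nonneg_left h (mul_nonneg (abs_nonneg (M k i)) (abs_nonneg (M j i)))
  simp only [Matrix.trace, Matrix.diag] at this
  linarith

lemma lg_iter {n : ℕ} (G P R : Matrix (Fin n) (Fin n) ℝ)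
    (h : (Gᵀ * P * G + R - P).PosSemidef) (N : ℕ) :
    ((G ^ N)ᵀ * P * (G ^ N) + ∑ j ∈ Finset.range N, (G ^ j)ᵀ * R * G ^ j - P).PosSemidef := by
  induction N with
  | zero => simpa using Matrix.PosSemidef.zero
  | succ N ih =>
    have h1 := (h.conjTranspose_mul_mul_same (G ^ N)).add ih
    convert h1 using 1
    rw [Finset.sum_range_succ, Matrix.conjTranspose_eq_transpose_of_trivial, pow_succ',
      Matrix.transpose_mul]
    simp only [Matrix.mul_add, Matrix.add_mul, Matrix.mul_sub, Matrix.sub_mul, Matrix.mul_assoc]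
    abel

lemma lg_bound {n m : ℕ} (A : Matrix (Fin n) (Fin n) ℝ) (B : Matrix (Fin n) (Fin m) ℝ)
    (hstab : Stabilizable A B) : ∃ C : ℝ, ∀ ε > (0 : ℝ), ε ≤ 1 → ∀ P, IsDARESol A B ε P →
      P.trace ≤ C := by
  obtain ⟨F, hF⟩ := hstab
  set G := A - B * F with hG
  have ht := lg_pow_tendsto G hF
  have hc : Continuous fun M : Matrix (Fin n) (Fin n) ℝ =>
      ∑ i, ∑ j, ∑ k, |M k i| * |M j i| := by
    refine continuous_finsetSum _ fun i _ => continuous_finsetSum _ fun j _ =>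
      continuous_finsetSum _ fun k _ => ?_
    exact ((continuous_id.matrix_elem k i).abs).mul ((continuous_id.matrix_elem j i).abs)
  have h0 := (hc.tendsto 0).comp ht
  simp only [Matrix.zero_apply, abs_zero, mul_zero, Finset.sum_const_zero] at h0
  obtain ⟨N, hN⟩ := (h0.eventually (gt_mem_nhds (show (0 : ℝ) < 1 / 2 by norm_num))).exists
  simp only [Function.comp] at hN
  set R : Matrix (Fin n) (Fin n) ℝ := Fᵀ * F + 1 with hR
  refine ⟨2 * (∑ j ∈ Finset.range N, (G ^ j)ᵀ * R * G ^ j).trace, ?_⟩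
  intro ε hε hε1 P hP
  obtain ⟨e1, -, -⟩ := lg_square A B ε P hP F
  have hpsd : (Bᵀ * P * B).PosSemidef := by
    simpa using hP.1.posSemidef.conjTranspose_mul_mul_same B
  have hS : (1 + Bᵀ * P * B).PosSemidef := Matrix.PosSemidef.one.add hpsd
  have hstep : (Gᵀ * P * G + R - P).PosSemidef := by
    have h1 := (hS.conjTranspose_mul_mul_same (F - gainK A B P)).add
      ((Matrix.PosSemidef.one (n := Fin n) (R := ℝ)).smul (sub_nonneg.2 hε1))
    convert h1 using 1
    rw [Matrix.conjTranspose_eq_transpose_of_trivial, ← sub_eq_iff_eq_add'.2 e1, hR, sub_smul,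
      one_smul]
    abel
  have h2 := (lg_iter G P R hstep N).trace_nonneg
  rw [Matrix.trace_sub, Matrix.trace_add] at h2
  have h3 := lg_trace_le hP.1.posSemidef (G ^ N)
  have h4 := hP.1.posSemidef.trace_nonneg
  nlinarith

lemma lg_K_bound {n m : ℕ} (A : Matrix (Fin n) (Fin n) ℝ) (B : Matrix (Fin n) (Fin m) ℝ)
    (ε : ℝ) (hε : 0 < ε) (P) (hP : IsDARESol A B ε P) (i : Fin m) (j : Fin n) :
    |gainK A B P i j| ≤ 1 + P.trace := by
  obtain ⟨e1, -, -⟩ := lg_square A B ε P hP (gainK A B P)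
  set K := gainK A B P
  rw [sub_self, Matrix.mul_zero, add_zero] at e1
  have h1 := congrFun (congrFun e1 j) j
  have h2 : 0 ≤ ((A - B * K)ᵀ * P * (A - B * K)) j j := by
    have := hP.1.posSemidef.conjTranspose_mul_mul_same (A - B * K)
    rw [Matrix.conjTranspose_eq_transpose_of_trivial] at this
    exact this.diag_nonneg
  have h3 : K i j ^ 2 ≤ (Kᵀ * K) j j := by
    rw [Matrix.mul_apply]
    have := Finset.single_le_sum (f := fun l => Kᵀ j l * K l j)
      (fun l _ => mul_self_nonneg (K l j)) (Finset.mem_univ i)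
    rw [sq]; exact this
  have h4 : P j j ≤ P.trace := (le_abs_self _).trans (lg_entry hP.1.posSemidef j j)
  simp only [Matrix.add_apply, Matrix.smul_apply, Matrix.one_apply_eq, smul_eq_mul] at h1
  have h5 := hP.1.posSemidef.trace_nonneg
  exact abs_le_of_sq_le_sq (by nlinarith) (by linarith)

lemma lg_small_psd {m : ℕ} (N : Matrix (Fin m) (Fin m) ℝ) (hN : N.IsHermitian) (c : ℝ)
    (h : ∑ i, ∑ j, |N i j| ≤ c) : (c • (1 : Matrix (Fin m) (Fin m) ℝ) - N).PosSemidef := by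
  refine Matrix.PosSemidef.of_dotProduct_mulVec_nonneg ?_ ?_
  · refine Matrix.IsHermitian.sub ?_ hN
    exact (Matrix.isHermitian_one).smul (by simp [IsSelfAdjoint])
  · intro x
    rw [Matrix.sub_mulVec, dotProduct_sub, Matrix.smul_mulVec, Matrix.one_mulVec, dotProduct_smul,
      star_trivial, sub_nonneg, smul_eq_mul]
    have hx : ∀ i, x i ^ 2 ≤ x ⬝ᵥ x := by
      intro i
      have := Finset.single_le_sum (f := fun l => x l * x l)
        (fun l _ => mul_self_nonneg (x l)) (Finset.mem_univ i)
      rw [sq]; exact this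
    have hxx : 0 ≤ x ⬝ᵥ x := Finset.sum_nonneg fun l _ => mul_self_nonneg (x l)
    refine le_trans ?_ (mul_le_mul_of_nonneg_right h hxx)
    have e : x ⬝ᵥ N *ᵥ x = ∑ i, ∑ j, x i * (N i j * x j) := by
      simp only [dotProduct, Matrix.mulVec, Finset.mul_sum]
    rw [e, Finset.sum_mul]
    refine Finset.sum_le_sum fun i _ => ?_
    rw [Finset.sum_mul]
    refine Finset.sum_le_sum fun j _ => ?_
    have a1 : |x i * x j| ≤ x ⬝ᵥ x := by
      rw [abs_le]
      constructor <;> nlinarith [hx i, hx j, sq_nonneg (x i + x j), sq_nonneg (x i - x j)]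
    calc x i * (N i j * x j) ≤ |x i * (N i j * x j)| := le_abs_self _
      _ = |N i j| * |x i * x j| := by rw [← abs_mul]; congr 1; ring
      _ ≤ _ := mul_le_mul_of_nonneg_left a1 (abs_nonneg _)

lemma lg_schur {n m : ℕ} (A : Matrix (Fin n) (Fin n) ℝ) (B : Matrix (Fin n) (Fin m) ℝ)
    (ε : ℝ) (hε : 0 < ε) (P) (hP : IsDARESol A B ε P) (ρ : ℝ)
    (h : ∑ i, ∑ j, |((1 - ρ) ^ 2 • (Bᵀ * P * B) : Matrix (Fin m) (Fin m) ℝ) i j| ≤ 2 * ρ - 1) :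
    SchurStable (A - ρ • (B * gainK A B P)) := by
  obtain ⟨e1, -, -⟩ := lg_square A B ε P hP (ρ • gainK A B P)
  set K := gainK A B P
  have hpsd : (Bᵀ * P * B).PosSemidef := by
    simpa using hP.1.posSemidef.conjTranspose_mul_mul_same B
  have hQ := lg_small_psd ((1 - ρ) ^ 2 • (Bᵀ * P * B)) (hpsd.smul (sq_nonneg _)).isHermitian _ h
  set Q := (2 * ρ - 1) • (1 : Matrix (Fin m) (Fin m) ℝ) - (1 - ρ) ^ 2 • (Bᵀ * P * B) with hQd
  rw [Matrix.mul_smul] at e1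
  set G := A - ρ • (B * K) with hG
  have e2 : Gᵀ * P * G + ε • (1 : Matrix (Fin n) (Fin n) ℝ) + Kᵀ * Q * K = P := by
    have h1 : ρ • K - K = (ρ - 1) • K := by rw [sub_smul, one_smul]
    rw [h1] at e1
    simp only [Matrix.transpose_smul, Matrix.smul_mul, Matrix.mul_smul, Matrix.mul_add,
      Matrix.add_mul, Matrix.mul_one, smul_add, smul_smul] at e1
    rw [hQd]
    simp only [Matrix.mul_sub, Matrix.sub_mul, Matrix.smul_mul, Matrix.mul_smul, Matrix.mul_one]
    ext i j
    have e3 := congrFun (congrFun e1 i) j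
    simp only [Matrix.add_apply, Matrix.sub_apply, Matrix.smul_apply, smul_eq_mul] at e3 ⊢
    linear_combination e3
  intro μ hμ
  obtain ⟨v, hv0, hv⟩ := (lg_spec_iff _ _).1 hμ
  replace hv : lgC G *ᵥ v = μ • v := hv
  have q1 : ‖μ‖ ^ 2 * lgq P v + ε * lgq 1 v + lgq Q (lgC K *ᵥ v) = lgq P v := by
    conv_rhs => rw [← e2, lgq_add, lgq_add, lgq_congr, lgq_congr, hv, lgq_smul, lgq_smul_left]
  have q2 := lgq_nonneg hP.1.posSemidef v
  have q3 := lgq_nonneg hQ (lgC K *ᵥ v)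
  have q4 := mul_pos hε (lgq_one_pos hv0)
  by_contra hlt
  push Not at hlt
  have : 1 ≤ ‖μ‖ ^ 2 := by nlinarith
  nlinarith

lemma lg_lim {n m : ℕ}
    (A : Matrix (Fin n) (Fin n) ℝ) (B : Matrix (Fin n) (Fin m) ℝ)
    (hstab : Stabilizable A B) (hA : EigInClosedUnitDisc A)
    (P : ℕ → Matrix (Fin n) (Fin n) ℝ) (e : ℕ → ℝ) (he : ∀ k, 0 < e k)
    (hP : ∀ k, IsDARESol A B (e k) (P k))
    (P0 : Matrix (Fin n) (Fin n) ℝ) (K0 : Matrix (Fin m) (Fin n) ℝ)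
    (hlP : Tendsto P atTop (𝓝 P0)) (hlK : Tendsto (fun k => gainK A B (P k)) atTop (𝓝 K0))
    (hle : Tendsto e atTop (𝓝 0)) : P0 = 0 := by
  have hall : Tendsto (fun k => (P k, gainK A B (P k), e k)) atTop (𝓝 (P0, K0, 0)) :=
    hlP.prodMk_nhds (hlK.prodMk_nhds hle)
  have key : ∀ {a b : ℕ} (f g : Matrix (Fin n) (Fin n) ℝ × Matrix (Fin m) (Fin n) ℝ × ℝ →
      Matrix (Fin a) (Fin b) ℝ), Continuous f → Continuous g →
      (∀ k, f (P k, gainK A B (P k), e k) = g (P k, gainK A B (P k), e k)) →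
      f (P0, K0, 0) = g (P0, K0, 0) := by
    intro a b f g hf hg h
    refine tendsto_nhds_unique ((hf.tendsto _).comp hall) ?_
    refine ((hg.tendsto _).comp hall).congr fun k => (h k).symm
  refine lg_limit_zero A B hstab hA P0 K0 ?_ ?_ ?_ ?_
  · refine Matrix.PosSemidef.of_dotProduct_mulVec_nonneg ?_ ?_
    · have := key (fun p => p.1ᵀ) (fun p => p.1) (by fun_prop) (by fun_prop)
        (fun k => by simpa using (hP k).1.isHermitian.eq)
      simpa [Matrix.IsHermitian] using this
    · intro x
      have hc : Continuous fun M : Matrix (Fin n) (Fin n) ℝ => star x ⬝ᵥ (M *ᵥ x) := by fun_prop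
      exact ge_of_tendsto' ((hc.tendsto _).comp hlP)
        fun k => (hP k).1.posSemidef.dotProduct_mulVec_nonneg x
  · exact key (fun p => Bᵀ * p.1 * (A - B * p.2.1)) (fun p => p.2.1) (by fun_prop) (by fun_prop)
      (fun k => (lg_square A B _ _ (hP k) 0).2.1)
  · have := key (fun p => Aᵀ * p.1 * (A - B * p.2.1) + p.2.2 • (1 : Matrix (Fin n) (Fin n) ℝ))
      (fun p => p.1) (by fun_prop) (by fun_prop)
      (fun k => (lg_square A B _ _ (hP k) 0).2.2)
    simpa using this
  · have := key (fun p => (A - B * p.2.1)ᵀ * p.1 * (A - B * p.2.1) + p.2.1ᵀ * p.2.1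
        + p.2.2 • (1 : Matrix (Fin n) (Fin n) ℝ))
      (fun p => p.1) (by fun_prop) (by fun_prop)
      (fun k => by
        have := (lg_square A B _ _ (hP k) (gainK A B (P k))).1
        simpa using this)
    simpa using this

/-- for every `ρ > 1/2` there exists `ε* > 0` such that `A − ρ B K_ε` is
Schur stable for all `ε ∈ (0, ε*]`. -/
theorem lowgain_closed_loop_schur {n m : ℕ}
    (A : Matrix (Fin n) (Fin n) ℝ) (B : Matrix (Fin n) (Fin m) ℝ)
    (hstab : Stabilizable A B) (hA : EigInClosedUnitDisc A)
    (P : ℝ → Matrix (Fin n) (Fin n) ℝ)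
    (hP : ∀ ε > (0 : ℝ), IsDARESol A B ε (P ε))
    (ρ : ℝ) (hρ : 1 / 2 < ρ) :
    ∃ εstar > (0 : ℝ), ∀ ε ∈ Set.Ioc (0 : ℝ) εstar,
      SchurStable (A - ρ • (B * gainK A B (P ε))) := by
  by_contra hcon
  push Not at hcon
  have hpos : ∀ k : ℕ, (0 : ℝ) < 1 / ((k : ℝ) + 1) := fun k => by positivity
  choose e he hne using fun k : ℕ => hcon _ (hpos k)
  have he0 : ∀ k, 0 < e k := fun k => (he k).1
  have he1 : ∀ k, e k ≤ 1 := fun k => (he k).2.trans (by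
    rw [div_le_one (by positivity)]; have : (0 : ℝ) ≤ k := Nat.cast_nonneg k
    linarith)
  have het : Tendsto e atTop (𝓝 0) :=
    squeeze_zero (fun k => (he0 k).le) (fun k => (he k).2) tendsto_one_div_add_atTop_nhds_zero_nat
  obtain ⟨C, hC⟩ := lg_bound A B hstab
  have hCt : ∀ k, (P (e k)).trace ≤ C := fun k => hC _ (he0 k) (he1 k) _ (hP _ (he0 k))
  have hC0 : 0 ≤ C := (hP _ (he0 0)).1.posSemidef.trace_nonneg.trans (hCt 0)
  let u : ℕ → (Fin n → Fin n → ℝ) × (Fin m → Fin n → ℝ) :=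
    fun k => (P (e k), gainK A B (P (e k)))
  have hu : ∀ k, u k ∈ Metric.closedBall 0 (1 + C) := by
    intro k
    rw [mem_closedBall_zero_iff, Prod.norm_def, max_le_iff]
    have h1 : (0 : ℝ) ≤ 1 + C := by linarith
    constructor
    · refine (pi_norm_le_iff_of_nonneg h1).2 fun i => (pi_norm_le_iff_of_nonneg h1).2 fun j => ?_
      have := lg_entry (hP _ (he0 k)).1.posSemidef i j
      have h2 := hCt k
      rw [Real.norm_eq_abs]
      exact this.trans (by linarith)
    · refine (pi_norm_le_iff_of_nonneg h1).2 fun i => (pi_norm_le_iff_of_nonneg h1).2 fun j => ?_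
      have := lg_K_bound A B _ (he0 k) _ (hP _ (he0 k)) i j
      have h2 := hCt k
      rw [Real.norm_eq_abs]
      exact this.trans (by linarith)
  obtain ⟨⟨P0, K0⟩, -, φ, hφ, hlim⟩ := tendsto_subseq_of_bounded Metric.isBounded_closedBall hu
  have hlP : Tendsto (fun k => P (e (φ k))) atTop (𝓝 (P0 : Matrix (Fin n) (Fin n) ℝ)) :=
    (continuous_fst.tendsto _).comp hlim
  have hlK : Tendsto (fun k => gainK A B (P (e (φ k)))) atTop
      (𝓝 (K0 : Matrix (Fin m) (Fin n) ℝ)) :=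
    (continuous_snd.tendsto _).comp hlim
  have hle : Tendsto (fun k => e (φ k)) atTop (𝓝 0) := het.comp hφ.tendsto_atTop
  have hzero := lg_lim A B hstab hA (fun k => P (e (φ k))) (fun k => e (φ k)) (fun k => he0 _)
    (fun k => hP _ (he0 _)) P0 K0 hlP hlK hle
  rw [hzero] at hlP
  have hc : Continuous fun M : Matrix (Fin n) (Fin n) ℝ =>
      ∑ i, ∑ j, |((1 - ρ) ^ 2 • (Bᵀ * M * B) : Matrix (Fin m) (Fin m) ℝ) i j| := by
    refine continuous_finsetSum _ fun i _ => continuous_finsetSum _ fun j _ => ?_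
    have : Continuous fun M : Matrix (Fin n) (Fin n) ℝ =>
        ((1 - ρ) ^ 2 • (Bᵀ * M * B) : Matrix (Fin m) (Fin m) ℝ) := by fun_prop
    exact (this.matrix_elem i j).abs
  have h0 := (hc.tendsto 0).comp hlP
  simp only [Matrix.mul_zero, Matrix.zero_mul, smul_zero, Matrix.zero_apply, abs_zero,
    Finset.sum_const_zero] at h0
  obtain ⟨k, hk⟩ := (h0.eventually (gt_mem_nhds (show (0 : ℝ) < 2 * ρ - 1 by linarith))).exists
  exact hne (φ k) (lg_schur A B _ (he0 _) _ (hP _ (he0 _)) ρ hk.le)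
end
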